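/- Let n ≥ 1 and take b(t) = e^t, g(t) = ½e^{−t} (so b(t)g(t) = ½), and set ε₁ = 11/10, ε₂ = 9/10. Then there is a constant C > 0 such that for every ξ ∈ ℝⁿ, every 0 ≤ s ≤ t with ε₂ ≤ ½e^{−τ}|ξ| ≤ ε₁ for all τ ∈ [s,t], and every twice continuously differentiable v : [s,t] → ℂ satisfying v''(τ) + |ξ|²v(τ) + (e^τ + ½e^{−τ}|ξ|²)v'(τ) = 0 on [s,t], one has |ξ||v(t)| ≤ C·exp( −½∫ₛᵗ (e^τ + ½e^{−τ}|ξ|²) dτ )·( |ξ||v(s)| + |v'(s)| ) and |v'(t)| ≤ C·exp( −½∫ₛᵗ (e^τ + ½e^{−τ}|ξ|²) dτ )·( |ξ||v(s)| + |v'(s)| ). -/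

import Mathlib

open MeasureTheory Filter

/-!
For `v'' + ω² v + b v' = 0` the twisted energy `F = ω² ‖v‖² + ‖v'‖² + b ⟪v, v'⟫` satisfies
`F' = -b F + b' ⟪v, v'⟫`, so up to the error term it decays at the rate `exp (-∫ b)`. Below critical
damping, `|b| ≤ 2θω` with `θ < 1`, `F` is comparable to the energy `ω² ‖v‖² + ‖v'‖²`, and
`|b'| ≤ 2δω` then bounds the error term by `δ / (1 - θ) * F`: it costs only a factor
`exp (δ / (1 - θ) * (t - s))`.

For `b = eᵗ + ½e⁻ᵗr²` the ratio `b / (2r)` depends on `ρ = ½e⁻ᵗr` alone; it is `ρ/2 + 1/(4ρ)`, which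
is below `1` exactly between the roots `1 ± √2/2` of `2ρ² - 4ρ + 1`. Moreover `|b'| ≤ b`, and since
`ρ` decays like `e⁻ᵗ`, it stays in `[ε₂, ε₁]` only for a time `log (ε₁ / ε₂)`.
-/

open Set Real
open scoped RealInnerProductSpace

theorem le_exp_integral_mul_of_hasDerivWithinAt_le {f f' k : ℝ → ℝ} {s t : ℝ} (hst : s ≤ t)
    (hk : ContinuousOn k (Icc s t))
    (hf : ∀ τ ∈ Icc s t, HasDerivWithinAt f (f' τ) (Icc s t) τ)
    (hle : ∀ τ ∈ Icc s t, f' τ ≤ k τ * f τ) :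
    f t ≤ exp (∫ τ in s..t, k τ) * f s := by
  have hK : ∀ τ ∈ Icc s t,
      HasDerivWithinAt (fun u ↦ ∫ σ in s..u, k σ) (k τ) (Icc s t) τ := by
    intro τ hτ
    have : Fact (τ ∈ Icc s t) := ⟨hτ⟩
    exact intervalIntegral.integral_hasDerivWithinAt_right
      ((hk.mono (Icc_subset_Icc_right hτ.2)).intervalIntegrable_of_Icc hτ.1)
      (hk.stronglyMeasurableAtFilter_nhdsWithin measurableSet_Icc τ) (hk τ hτ)
  have hG : ∀ τ ∈ Icc s t, HasDerivWithinAt (fun u ↦ exp (-∫ σ in s..u, k σ) * f u)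
      (exp (-∫ σ in s..τ, k σ) * (f' τ - k τ * f τ)) (Icc s t) τ := fun τ hτ ↦
    ((hK τ hτ).fun_neg.exp.mul (hf τ hτ)).congr_deriv (by ring)
  have hanti : AntitoneOn (fun u ↦ exp (-∫ σ in s..u, k σ) * f u) (Icc s t) :=
    antitoneOn_of_hasDerivWithinAt_nonpos (convex_Icc s t)
      (fun τ hτ ↦ (hG τ hτ).continuousWithinAt)
      (fun τ hτ ↦ (hG τ (interior_subset hτ)).mono interior_subset)
      (fun τ hτ ↦ mul_nonpos_of_nonneg_of_nonpos (exp_pos _).le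
        (sub_nonpos.2 (hle τ (interior_subset hτ))))
  have hts := hanti (left_mem_Icc.2 hst) (right_mem_Icc.2 hst) hst
  simp only [intervalIntegral.integral_same, neg_zero, exp_zero, one_mul, exp_neg] at hts
  exact (inv_mul_le_iff₀ (exp_pos _)).1 hts

section Oscillator

variable {E : Type*} [NormedAddCommGroup E]

/-- The energy, up to the factor `1/2`, of a harmonic oscillator of frequency `ω` with position `x`
and velocity `y`. -/
def oscillatorEnergy (ω : ℝ) (x y : E) : ℝ :=
  ω ^ 2 * ‖x‖ ^ 2 + ‖y‖ ^ 2

lemma oscillatorEnergy_nonneg (ω : ℝ) (x y : E) : 0 ≤ oscillatorEnergy ω x y := by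
  unfold oscillatorEnergy
  positivity

lemma mul_norm_le_sqrt_oscillatorEnergy (ω : ℝ) (x y : E) :
    ω * ‖x‖ ≤ √(oscillatorEnergy ω x y) :=
  le_sqrt_of_sq_le (by rw [mul_pow, oscillatorEnergy]; exact le_add_of_nonneg_right (sq_nonneg _))

lemma norm_le_sqrt_oscillatorEnergy (ω : ℝ) (x y : E) : ‖y‖ ≤ √(oscillatorEnergy ω x y) :=
  le_sqrt_of_sq_le (le_add_of_nonneg_left (by positivity))

lemma sqrt_oscillatorEnergy_le {ω : ℝ} (hω : 0 ≤ ω) (x y : E) :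
    √(oscillatorEnergy ω x y) ≤ ω * ‖x‖ + ‖y‖ := by
  have hcross : 0 ≤ 2 * (ω * ‖x‖) * ‖y‖ := by positivity
  refine sqrt_le_iff.2 ⟨by positivity, ?_⟩
  rw [oscillatorEnergy, add_sq, mul_pow]
  linarith

lemma sqrt_oscillatorEnergy_le_of_le {ω M I : ℝ} {x y x₀ y₀ : E} (hω : 0 ≤ ω) (hM : 0 ≤ M)
    (h : oscillatorEnergy ω x y ≤ M * exp (-I) * oscillatorEnergy ω x₀ y₀) :
    √(oscillatorEnergy ω x y) ≤ √M * exp (-(1 / 2) * I) * (ω * ‖x₀‖ + ‖y₀‖) :=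
  calc √(oscillatorEnergy ω x y) ≤ √(M * exp (-I) * oscillatorEnergy ω x₀ y₀) := sqrt_le_sqrt h
    _ = √M * exp (-(1 / 2) * I) * √(oscillatorEnergy ω x₀ y₀) := by
        rw [sqrt_mul (by positivity), sqrt_mul hM, ← exp_half, neg_div, neg_mul, one_div_mul_eq_div]
    _ ≤ √M * exp (-(1 / 2) * I) * (ω * ‖x₀‖ + ‖y₀‖) := by
        gcongr
        exact sqrt_oscillatorEnergy_le hω x₀ y₀

variable [InnerProductSpace ℝ E]

/-- The energy of an oscillator with damping coefficient `b`, corrected by the cross term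
`b ⟪x, y⟫` so that it decays at the rate `b` when `b` is constant. It equals
`‖y + (b / 2) x‖² + (ω² - b² / 4) ‖x‖²`. -/
def twistedEnergy (ω b : ℝ) (x y : E) : ℝ :=
  oscillatorEnergy ω x y + b * ⟪x, y⟫

lemma abs_mul_inner_le_mul_oscillatorEnergy {ω c κ : ℝ} (hκ : 0 ≤ κ) (hc : |c| ≤ 2 * κ * ω)
    (x y : E) : |c * ⟪x, y⟫| ≤ κ * oscillatorEnergy ω x y :=
  calc |c * ⟪x, y⟫| ≤ 2 * κ * ω * (‖x‖ * ‖y‖) := by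
        rw [abs_mul]
        exact mul_le_mul hc (abs_real_inner_le_norm x y) (abs_nonneg _) ((abs_nonneg c).trans hc)
    _ = κ * (2 * (ω * ‖x‖) * ‖y‖) := by ring
    _ ≤ κ * oscillatorEnergy ω x y := by
        rw [oscillatorEnergy, ← mul_pow]
        gcongr
        exact two_mul_le_add_sq _ _

lemma twistedEnergy_le {ω b θ : ℝ} (hθ : 0 ≤ θ) (hb : |b| ≤ 2 * θ * ω) (x y : E) :
    twistedEnergy ω b x y ≤ (1 + θ) * oscillatorEnergy ω x y := by
  have := (abs_le.1 (abs_mul_inner_le_mul_oscillatorEnergy hθ hb x y)).2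
  rw [twistedEnergy]
  linarith

lemma le_twistedEnergy {ω b θ : ℝ} (hθ : 0 ≤ θ) (hb : |b| ≤ 2 * θ * ω) (x y : E) :
    (1 - θ) * oscillatorEnergy ω x y ≤ twistedEnergy ω b x y := by
  have := (abs_le.1 (abs_mul_inner_le_mul_oscillatorEnergy hθ hb x y)).1
  rw [twistedEnergy]
  linarith

lemma hasDerivWithinAt_twistedEnergy {ω b' τ : ℝ} {b : ℝ → ℝ} {x y : ℝ → E} {z : E} {S : Set ℝ}
    (hb : HasDerivWithinAt b b' S τ) (hx : HasDerivWithinAt x (y τ) S τ)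
    (hy : HasDerivWithinAt y z S τ) (heq : z + ω ^ 2 • x τ + b τ • y τ = 0) :
    HasDerivWithinAt (fun σ ↦ twistedEnergy ω (b σ) (x σ) (y σ))
      (-b τ * twistedEnergy ω (b τ) (x τ) (y τ) + b' * ⟪x τ, y τ⟫) S τ := by
  have hz : z = -(ω ^ 2 • x τ) - b τ • y τ := by
    rw [← sub_eq_zero, ← heq]
    abel
  refine (((hx.norm_sq.const_mul (ω ^ 2)).add hy.norm_sq).add (hb.mul (hx.inner ℝ hy))).congr_deriv
    ?_
  simp only [twistedEnergy, oscillatorEnergy, hz, inner_sub_right, inner_neg_right,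
    real_inner_smul_right, real_inner_self_eq_norm_sq, real_inner_comm (x τ) (y τ)]
  ring

theorem oscillatorEnergy_le_exp_mul {ω θ δ s t : ℝ} {b b' : ℝ → ℝ} {x y z : ℝ → E} (hst : s ≤ t)
    (hθ₀ : 0 ≤ θ) (hθ₁ : θ < 1) (hδ : 0 ≤ δ)
    (hb : ∀ τ ∈ Icc s t, HasDerivWithinAt b (b' τ) (Icc s t) τ)
    (hbθ : ∀ τ ∈ Icc s t, |b τ| ≤ 2 * θ * ω) (hbδ : ∀ τ ∈ Icc s t, |b' τ| ≤ 2 * δ * ω)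
    (hx : ∀ τ ∈ Icc s t, HasDerivWithinAt x (y τ) (Icc s t) τ)
    (hy : ∀ τ ∈ Icc s t, HasDerivWithinAt y (z τ) (Icc s t) τ)
    (heq : ∀ τ ∈ Icc s t, z τ + ω ^ 2 • x τ + b τ • y τ = 0) :
    oscillatorEnergy ω (x t) (y t) ≤ (1 + θ) / (1 - θ) * exp (δ / (1 - θ) * (t - s)) *
      exp (-∫ τ in s..t, b τ) * oscillatorEnergy ω (x s) (y s) := by
  have hθ : 0 < 1 - θ := sub_pos.2 hθ₁
  have hbc : ContinuousOn b (Icc s t) := fun τ hτ ↦ (hb τ hτ).continuousWithinAt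
  have herror : ∀ τ ∈ Icc s t, b' τ * ⟪x τ, y τ⟫ ≤
      δ / (1 - θ) * twistedEnergy ω (b τ) (x τ) (y τ) := fun τ hτ ↦
    calc b' τ * ⟪x τ, y τ⟫ ≤ δ * oscillatorEnergy ω (x τ) (y τ) :=
          (le_abs_self _).trans (abs_mul_inner_le_mul_oscillatorEnergy hδ (hbδ τ hτ) _ _)
      _ = δ / (1 - θ) * ((1 - θ) * oscillatorEnergy ω (x τ) (y τ)) := by field_simp
      _ ≤ δ / (1 - θ) * twistedEnergy ω (b τ) (x τ) (y τ) := by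
          gcongr
          exact le_twistedEnergy hθ₀ (hbθ τ hτ) _ _
  have hdecay := le_exp_integral_mul_of_hasDerivWithinAt_le (k := fun τ ↦ δ / (1 - θ) - b τ) hst
    (continuousOn_const.sub hbc)
    (fun τ hτ ↦ hasDerivWithinAt_twistedEnergy (hb τ hτ) (hx τ hτ) (hy τ hτ) (heq τ hτ))
    (fun τ hτ ↦ by linarith [herror τ hτ])
  have hexp : exp (∫ τ in s..t, (δ / (1 - θ) - b τ)) =
      exp (δ / (1 - θ) * (t - s)) * exp (-∫ τ in s..t, b τ) := by
    rw [intervalIntegral.integral_sub intervalIntegrable_const (hbc.intervalIntegrable_of_Icc hst),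
      intervalIntegral.integral_const, smul_eq_mul, mul_comm, ← exp_add, ← sub_eq_add_neg]
  have hs := twistedEnergy_le hθ₀ (hbθ s (left_mem_Icc.2 hst)) (x s) (y s)
  have ht := le_twistedEnergy hθ₀ (hbθ t (right_mem_Icc.2 hst)) (x t) (y t)
  rw [hexp] at hdecay
  refine le_of_mul_le_mul_left ((ht.trans hdecay).trans ?_) hθ
  grw [hs]
  exact le_of_eq (by field_simp)

end Oscillator

section Overdamping

/-- The damping coefficient `b(τ) + g(τ) r²` at frequency `r`, for `b(τ) = e^τ` and
`g(τ) = ½e^(-τ)`. -/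
noncomputable def overdamping (r τ : ℝ) : ℝ :=
  exp τ + (1 / 2) * exp (-τ) * r ^ 2

/-- The ratio of `overdamping r τ` to the critical damping `2r`, as a function of
`ρ = g(τ) r = ½e^(-τ)r`. The symbol `p` of the paper satisfies `p² = r² (1 - (dampingRatio ρ)²)`. -/
noncomputable def dampingRatio (ρ : ℝ) : ℝ :=
  ρ / 2 + 1 / (4 * ρ)

lemma overdamping_eq_dampingRatio {r : ℝ} (hr : r ≠ 0) (τ : ℝ) :
    overdamping r τ = 2 * dampingRatio ((1 / 2) * exp (-τ) * r) * r := by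
  rw [overdamping, dampingRatio, exp_neg]
  field_simp
  ring

lemma hasDerivAt_overdamping (r τ : ℝ) :
    HasDerivAt (overdamping r) (exp τ - (1 / 2) * exp (-τ) * r ^ 2) τ :=
  have hexp := ((hasDerivAt_neg τ).exp.const_mul (1 / 2)).mul_const (r ^ 2)
  ((hasDerivAt_exp τ).add hexp).congr_deriv (by ring)

lemma overdamping_nonneg (r τ : ℝ) : 0 ≤ overdamping r τ := by
  unfold overdamping
  positivity

lemma abs_deriv_overdamping_le (r τ : ℝ) :
    |deriv (overdamping r) τ| ≤ overdamping r τ := by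
  rw [(hasDerivAt_overdamping r τ).deriv]
  exact (abs_sub _ _).trans_eq (by rw [abs_of_nonneg, abs_of_nonneg, overdamping] <;> positivity)

lemma one_sub_sqrt_two_div_two_pos : 0 < 1 - √2 / 2 := by
  linarith [sqrt_two_lt_three_halves]

lemma dampingRatio_lt_one {ρ : ℝ} (h₁ : 1 - √2 / 2 < ρ) (h₂ : ρ < 1 + √2 / 2) :
    dampingRatio ρ < 1 := by
  have hρ : 0 < ρ := one_sub_sqrt_two_div_two_pos.trans h₁
  have hroots : (ρ - (1 - √2 / 2)) * (ρ - (1 + √2 / 2)) < 0 :=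
    mul_neg_of_pos_of_neg (sub_pos.2 h₁) (sub_neg.2 h₂)
  have hsq : √2 ^ 2 = 2 := sq_sqrt zero_le_two
  rw [dampingRatio, div_add_div _ _ two_ne_zero (by positivity), div_lt_one (by positivity)]
  linarith

lemma exists_dampingRatio_le {ε₁ ε₂ : ℝ} (hε₂ : 1 - √2 / 2 < ε₂) (hε₁ : ε₁ < 1 + √2 / 2) :
    ∃ θ, 0 ≤ θ ∧ θ < 1 ∧ ∀ ρ ∈ Icc ε₂ ε₁, dampingRatio ρ ≤ θ := by
  have hcont : ContinuousOn dampingRatio (Icc ε₂ ε₁) := by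
    intro ρ hρ
    have hρ_pos : 0 < ρ := (one_sub_sqrt_two_div_two_pos.trans hε₂).trans_le hρ.1
    unfold dampingRatio
    fun_prop (disch := positivity)
  obtain ⟨θ, hθ, hle⟩ := isCompact_Icc.exists_forall_le' (α := ℝᵒᵈ) hcont
    fun ρ hρ ↦ dampingRatio_lt_one (hε₂.trans_le hρ.1) (hρ.2.trans_lt hε₁)
  exact ⟨max 0 θ, le_max_left _ _, max_lt one_pos hθ, fun ρ hρ ↦ le_max_of_le_right (hle ρ hρ)⟩

lemma sub_le_log_div_of_exp_neg_mul_le {r s t ε₁ ε₂ : ℝ} (hε₂ : 0 < ε₂)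
    (hs : (1 / 2) * exp (-s) * r ≤ ε₁) (ht : ε₂ ≤ (1 / 2) * exp (-t) * r) :
    t - s ≤ log (ε₁ / ε₂) := by
  have hexp : exp (t - s) ≤ ε₁ / ε₂ := by
    rw [le_div_iff₀ hε₂]
    calc exp (t - s) * ε₂ ≤ exp (t - s) * ((1 / 2) * exp (-t) * r) := by gcongr
      _ = (1 / 2) * (exp (t - s) * exp (-t)) * r := by ring
      _ = (1 / 2) * exp (-s) * r := by rw [← exp_add]; ring_nf
      _ ≤ ε₁ := hs
  exact (le_log_iff_exp_le ((exp_pos _).trans_le hexp)).2 hexp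

variable {E : Type*} [NormedAddCommGroup E] [InnerProductSpace ℝ E]

theorem oscillatorEnergy_le_of_overdamping_le {r s t T θ : ℝ} {v v' v'' : ℝ → E} (hst : s ≤ t)
    (hT : t - s ≤ T) (hθ₀ : 0 ≤ θ) (hθ₁ : θ < 1)
    (hθ : ∀ τ ∈ Icc s t, overdamping r τ ≤ 2 * θ * r)
    (hv : ∀ τ ∈ Icc s t, HasDerivWithinAt v (v' τ) (Icc s t) τ)
    (hv' : ∀ τ ∈ Icc s t, HasDerivWithinAt v' (v'' τ) (Icc s t) τ)
    (heq : ∀ τ ∈ Icc s t, v'' τ + r ^ 2 • v τ + overdamping r τ • v' τ = 0) :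
    oscillatorEnergy r (v t) (v' t) ≤ (1 + θ) / (1 - θ) * exp (θ / (1 - θ) * T) *
      exp (-∫ τ in s..t, overdamping r τ) * oscillatorEnergy r (v s) (v' s) := by
  have : 0 < 1 - θ := sub_pos.2 hθ₁
  have henergy := oscillatorEnergy_le_exp_mul hst hθ₀ hθ₁ hθ₀
    (fun τ _ ↦ (hasDerivAt_overdamping r τ).differentiableAt.hasDerivAt.hasDerivWithinAt)
    (fun τ hτ ↦ (abs_of_nonneg (overdamping_nonneg r τ)).trans_le (hθ τ hτ))
    (fun τ hτ ↦ (abs_deriv_overdamping_le r τ).trans (hθ τ hτ)) hv hv' heq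
  refine henergy.trans ?_
  gcongr
  exact oscillatorEnergy_nonneg ..

theorem overdamping_hyperbolic_zone_estimate_general {ε₁ ε₂ : ℝ} (hε₂ : 1 - √2 / 2 < ε₂)
    (hε₁ : ε₁ < 1 + √2 / 2) :
    ∃ C : ℝ, 0 < C ∧ ∀ r s t : ℝ, s ≤ t →
      (∀ τ ∈ Icc s t, (1 / 2) * exp (-τ) * r ∈ Icc ε₂ ε₁) →
      ∀ v v' v'' : ℝ → E,
        (∀ τ ∈ Icc s t, HasDerivWithinAt v (v' τ) (Icc s t) τ) →
        (∀ τ ∈ Icc s t, HasDerivWithinAt v' (v'' τ) (Icc s t) τ) →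
        (∀ τ ∈ Icc s t, v'' τ + r ^ 2 • v τ + overdamping r τ • v' τ = 0) →
        r * ‖v t‖ ≤
            C * exp (-(1 / 2) * ∫ τ in s..t, overdamping r τ) * (r * ‖v s‖ + ‖v' s‖) ∧
          ‖v' t‖ ≤
            C * exp (-(1 / 2) * ∫ τ in s..t, overdamping r τ) * (r * ‖v s‖ + ‖v' s‖) := by
  have hε₂_pos : 0 < ε₂ := one_sub_sqrt_two_div_two_pos.trans hε₂
  obtain ⟨θ, hθ₀, hθ₁, hratio⟩ := exists_dampingRatio_le hε₂ hε₁
  have : 0 < 1 - θ := sub_pos.2 hθ₁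
  let M := (1 + θ) / (1 - θ) * exp (θ / (1 - θ) * log (ε₁ / ε₂))
  have hM : 0 < M := by positivity
  refine ⟨√M, sqrt_pos.2 hM, fun r s t hst hzone v v' v'' hv hv' heq ↦ ?_⟩
  have hs := hzone s (left_mem_Icc.2 hst)
  have ht := hzone t (right_mem_Icc.2 hst)
  have hr : 0 < r := pos_of_mul_pos_right (hε₂_pos.trans_le hs.1) (by positivity)
  have hdamping : ∀ τ ∈ Icc s t, overdamping r τ ≤ 2 * θ * r := fun τ hτ ↦ by
    rw [overdamping_eq_dampingRatio hr.ne']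
    gcongr
    exact hratio _ (hzone τ hτ)
  have henergy := oscillatorEnergy_le_of_overdamping_le hst
    (sub_le_log_div_of_exp_neg_mul_le hε₂_pos hs.2 ht.1) hθ₀ hθ₁ hdamping hv hv' heq
  have hsqrt := sqrt_oscillatorEnergy_le_of_le hr.le hM.le henergy
  exact ⟨(mul_norm_le_sqrt_oscillatorEnergy ..).trans hsqrt,
    (norm_le_sqrt_oscillatorEnergy ..).trans hsqrt⟩

end Overdamping

/-- Proposition `Prop:Overdamping-Integrable-Zhyp` of the paper: hyperbolic-zone
estimates for the over-damping model with `b(t) = eᵗ`, `g(t) = ½e^(-t)`, where the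
hyperbolic zone is `{(t,ξ) : 9/10 ≤ g(t)|ξ| ≤ 11/10}`. -/
theorem overdamping_hyperbolic_zone_estimate (n : ℕ) (hn : 1 ≤ n) :
    ∃ C : ℝ, 0 < C ∧
      ∀ (ξ : EuclideanSpace ℝ (Fin n)) (s t : ℝ), 0 ≤ s → s ≤ t →
        (∀ τ ∈ Set.Icc s t,
          (9 : ℝ) / 10 ≤ (1 / 2) * Real.exp (-τ) * ‖ξ‖ ∧
            (1 / 2) * Real.exp (-τ) * ‖ξ‖ ≤ 11 / 10) →
        ∀ v : ℝ → ℂ, ContDiff ℝ 2 v →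
          (∀ τ ∈ Set.Icc s t,
            deriv (deriv v) τ + ((‖ξ‖ ^ 2 : ℝ) : ℂ) * v τ +
              ((Real.exp τ + (1 / 2) * Real.exp (-τ) * ‖ξ‖ ^ 2 : ℝ) : ℂ) * deriv v τ = 0) →
          ‖ξ‖ * ‖v t‖ ≤
              C * Real.exp (-(1 / 2) *
                  ∫ τ in s..t, (Real.exp τ + (1 / 2) * Real.exp (-τ) * ‖ξ‖ ^ 2)) *
                (‖ξ‖ * ‖v s‖ + ‖deriv v s‖) ∧
            ‖deriv v t‖ ≤
              C * Real.exp (-(1 / 2) *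
                  ∫ τ in s..t, (Real.exp τ + (1 / 2) * Real.exp (-τ) * ‖ξ‖ ^ 2)) *
                (‖ξ‖ * ‖v s‖ + ‖deriv v s‖) := by
  obtain ⟨C, hC, hestimate⟩ := overdamping_hyperbolic_zone_estimate_general (E := ℂ)
    (ε₁ := 11 / 10) (ε₂ := 9 / 10) (by linarith [one_lt_sqrt_two]) (by linarith [one_lt_sqrt_two])
  refine ⟨C, hC, fun ξ s t _ hst hzone v hv hode ↦ ?_⟩
  have hv' : ContDiff ℝ 1 (deriv v) := ContDiff.deriv' hv
  exact hestimate ‖ξ‖ s t hst hzone v (deriv v) (deriv (deriv v))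
    (fun τ _ ↦ (hv.differentiable two_ne_zero τ).hasDerivAt.hasDerivWithinAt)
    (fun τ _ ↦ (hv'.differentiable one_ne_zero τ).hasDerivAt.hasDerivWithinAt)
    (by simpa only [Complex.real_smul, overdamping] using hode)
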